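/- arXiv:2105.09117 — 12 statements merged into one kernel-verified Lean document; each statement's English description precedes it below -/
import Mathlib

section
/- Let G be a group containing an element k of infinite order. Then G is a J-group with constant k; that is, there exists a function f : G → G such that f(x·k) = x·f(x) holds for all x ∈ G. -/
/-- A first-order multiplicative recurrence indexed by the integers has a solution. -/
theorem exists_int_mul_recurrence {G : Type*} [Group G] (a : ℤ → G) :
    ∃ F : ℤ → G, ∀ n : ℤ, F (n + 1) = a n * F n := by
  let pos : ℕ → G := fun n => Nat.rec 1 (fun m y => a m * y) n
  let neg : ℕ → G := fun n => Nat.rec 1 (fun m y => (a (Int.negSucc m))⁻¹ * y) n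
  refine ⟨fun n => Int.casesOn n pos (fun m => neg (m + 1)), fun n => ?_⟩
  rcases n with n | _ | n
  · rfl
  · exact (mul_inv_cancel_left (a (Int.negSucc 0)) 1).symm
  · exact (mul_inv_cancel_left (a (Int.negSucc (n + 1))) (neg (n + 1))).symm

/-- If a group `G` has an element `k` of infinite order, then `G` is a `J`-group
with constant `k`: there is a function `f : G → G` with `f (x * k) = x * f x`
for all `x`. -/
theorem infinite_order_element_isJGroup {G : Type*} [Group G] (k : G)
    (hk : ¬ IsOfFinOrder k) :
    ∃ f : G → G, ∀ x : G, f (x * k) = x * f x := by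
  choose F hF using fun r : G => exists_int_mul_recurrence fun n : ℤ => r * k ^ n
  let r : G → G := fun x => (x : G ⧸ Subgroup.zpowers k).out
  have hr : ∀ x, r (x * k) = r x := fun x =>
    congrArg Quotient.out
      (QuotientGroup.mk_mul_of_mem x (Subgroup.mem_zpowers k))
  have hex : ∀ x, ∃ n : ℤ, r x * k ^ n = x := fun x => by
    obtain ⟨n, hn⟩ := Subgroup.mem_zpowers_iff.1
      (QuotientGroup.eq.1 (QuotientGroup.out_eq' (x : G ⧸ Subgroup.zpowers k)))
    exact ⟨n, by rw [hn, mul_inv_cancel_left]⟩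
  choose e he using hex
  have hinj : Function.Injective fun n : ℤ => k ^ n :=
    injective_zpow_iff_not_isOfFinOrder.2 hk
  have hstep : ∀ x, e (x * k) = e x + 1 := fun x => hinj <| by
    have h := he (x * k)
    rw [hr] at h
    refine mul_left_cancel (a := r x) ?_
    simp only [zpow_add_one, ← mul_assoc, he, h]
  refine ⟨fun x => F (r x) (e x), fun x => ?_⟩
  simp only [hr, hstep, hF, he]
end

section
/- Let G be a torsion group (every element has finite order). Then G is a J-group if and only if there exists k ∈ G such that, writing n for the order of k, the ordered product (x·k^{n-1})·(x·k^{n-2})⋯(x·k^{1})·(x·k^{0}) equals the identity for all x ∈ G. -/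
/-- The ordered product `(x * k ^ (m - 1)) * ⋯ * (x * k) * x`. -/
def shiftedProd {G : Type*} [Group G] (k x : G) : ℕ → G
  | 0 => 1
  | m + 1 => x * k ^ m * shiftedProd k x m

theorem prod_map_range_eq_shiftedProd {G : Type*} [Group G] (k x : G) (m : ℕ) :
    ((List.range m).map (fun i => x * k ^ (m - 1 - i))).prod = shiftedProd k x m := by
  induction m with
  | zero => rfl
  | succ m ih =>
    rw [List.range_succ_eq_map, List.map_cons, List.prod_cons, List.map_map, shiftedProd, ← ih]
    congr 3
    funext i
    simp only [Function.comp_apply]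
    congr 2
    omega

theorem shiftedProd_add {G : Type*} [Group G] (k x : G) (a b : ℕ) :
    shiftedProd k x (a + b) = shiftedProd k (x * k ^ b) a * shiftedProd k x b := by
  induction a with
  | zero => simp [shiftedProd]
  | succ a ih =>
    rw [Nat.add_right_comm, shiftedProd, shiftedProd, ih, Nat.add_comm a b,
      pow_add]
    simp only [mul_assoc]

theorem shiftedProd_mod_orderOf {G : Type*} [Group G] {k x : G}
    (h : shiftedProd k x (orderOf k) = 1) (m : ℕ) :
    shiftedProd k x (m % orderOf k) = shiftedProd k x m := by
  have hper : Function.Periodic (shiftedProd k x) (orderOf k) := fun a => by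
    rw [shiftedProd_add, pow_orderOf_eq_one, mul_one, h, mul_one]
  exact hper.map_mod_nat m

theorem apply_mul_pow_eq_shiftedProd_mul {G : Type*} [Group G] {k : G} {f : G → G}
    (hf : ∀ x, f (x * k) = x * f x) (x : G) (m : ℕ) :
    f (x * k ^ m) = shiftedProd k x m * f x := by
  induction m with
  | zero => simp [shiftedProd]
  | succ m ih => rw [pow_succ, ← mul_assoc, hf, ih, shiftedProd, mul_assoc (x * k ^ m)]

theorem exists_apply_mul_eq_mul_apply {G : Type*} [Group G] {k : G} (hk : IsOfFinOrder k)
    (h : ∀ x, shiftedProd k x (orderOf k) = 1) :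
    ∃ f : G → G, ∀ x, f (x * k) = x * f x := by
  let r : G → G := fun x => (QuotientGroup.mk x : G ⧸ Subgroup.zpowers k).out
  have hr : ∀ x, r (x * k) = r x := fun x => by
    simp only [r]
    rw [QuotientGroup.mk_mul_of_mem x (Subgroup.mem_zpowers k)]
  have hex : ∀ x, ∃ e : ℕ, r x * k ^ e = x := fun x => by
    have hmem : (r x)⁻¹ * x ∈ Subgroup.zpowers k :=
      QuotientGroup.eq.mp (Quotient.out_eq _)
    obtain ⟨e, he⟩ := hk.mem_powers_iff_mem_zpowers.mpr hmem
    exact ⟨e, (congrArg (r x * ·) he).trans (mul_inv_cancel_left _ _)⟩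
  choose e he using hex
  refine ⟨fun x => shiftedProd k (r x) (e x), fun x => ?_⟩
  have hpow : k ^ e (x * k) = k ^ (e x + 1) := by
    have hxk := he (x * k)
    rw [hr] at hxk
    apply mul_left_cancel (a := r x)
    rw [hxk, pow_succ, ← mul_assoc, he]
  have hmod : e (x * k) % orderOf k = (e x + 1) % orderOf k := pow_eq_pow_iff_modEq.mp hpow
  simp only [hr]
  rw [← shiftedProd_mod_orderOf (h _), hmod, shiftedProd_mod_orderOf (h _), shiftedProd, he]

/-- A torsion group `G` is a `J`-group if and only if there is `k ∈ G` such that,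
with `n = orderOf k`, the ordered product `(x * k^(n-1)) * (x * k^(n-2)) * ⋯ * x`
equals `1` for all `x ∈ G`. -/
theorem torsion_isJGroup_iff_witness {G : Type*} [Group G]
    (hG : ∀ g : G, IsOfFinOrder g) :
    (∃ (k : G) (f : G → G), ∀ x : G, f (x * k) = x * f x) ↔
      (∃ k : G, ∀ x : G,
        ((List.range (orderOf k)).map
          (fun i => x * k ^ (orderOf k - 1 - i))).prod = 1) := by
  simp only [prod_map_range_eq_shiftedProd]
  constructor
  · rintro ⟨k, f, hf⟩
    refine ⟨k, fun x => ?_⟩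
    have hx := apply_mul_pow_eq_shiftedProd_mul hf x (orderOf k)
    rwa [pow_orderOf_eq_one, mul_one, right_eq_mul] at hx
  · rintro ⟨k, hk⟩
    exact ⟨k, exists_apply_mul_eq_mul_apply (hG k) hk⟩
end

section
/- Every finite J-group has odd order. -/
/-- If `x * x = 1`, the values of `f` along the orbit `x * k ^ i` are related by a reflection
around `x`. -/
theorem apply_mul_inv_pow_eq {G : Type*} [Group G] {k : G} {f : G → G}
    (hf : ∀ x : G, f (x * k) = x * f x) {x : G} (hx : x * x = 1) (i : ℕ) :
    f (x * k⁻¹ ^ i) = k ^ i * f (x * k ^ i) := by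
  induction i with
  | zero => simp
  | succ i ih =>
    have hback := hf (x * k⁻¹ ^ (i + 1))
    rw [mul_assoc, pow_succ k⁻¹, mul_assoc, inv_mul_cancel, mul_one, ih] at hback
    have hfwd := hf (x * k ^ i)
    rw [mul_assoc, ← pow_succ, mul_assoc, hback] at hfwd
    rw [hfwd, ← pow_succ, inv_pow, ← mul_assoc x, ← mul_assoc x, hx, one_mul,
      mul_inv_cancel_left]

/-- Every finite `J`-group has odd order. -/
theorem finite_jGroup_odd_order {G : Type*} [Group G] [Fintype G]
    (h : ∃ (k : G) (f : G → G), ∀ x : G, f (x * k) = x * f x) :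
    Odd (Fintype.card G) := by
  obtain ⟨k, f, hf⟩ := h
  have hpos : 0 < orderOf k := orderOf_pos k
  rw [← Nat.not_even_iff_odd]
  intro hG
  rcases Nat.even_or_odd' (orderOf k) with ⟨m, hm | hm⟩
  · have hk : k⁻¹ ^ m = k ^ m := by
      rw [inv_pow, inv_eq_iff_mul_eq_one, ← pow_add, ← two_mul, ← hm, pow_orderOf_eq_one]
    have hsymm := apply_mul_inv_pow_eq hf (one_mul (1 : G)) m
    rw [hk, right_eq_mul] at hsymm
    have := Nat.le_of_dvd (by omega) (orderOf_dvd_of_pow_eq_one hsymm)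
    omega
  · have hk : k⁻¹ ^ m = k ^ (m + 1) := by
      rw [inv_pow, inv_eq_iff_mul_eq_one, ← pow_add, ← add_assoc, ← two_mul, ← hm,
        pow_orderOf_eq_one]
    obtain ⟨x, hx⟩ := exists_prime_orderOf_dvd_card 2 hG.two_dvd
    have hxx : x * x = 1 := by rw [← pow_two, ← hx, pow_orderOf_eq_one]
    have hsymm := apply_mul_inv_pow_eq hf hxx m
    rw [hk, pow_succ, ← mul_assoc, hf, mul_assoc, mul_eq_right] at hsymm
    rw [hsymm, orderOf_one] at hx
    omega
end

section
/- For any group G, the following four conditions are equivalent: (1) there exist k ∈ G and f : G → G with f(x·k) = x·f(x) for all x ∈ G; (2) there exist k ∈ G and f : G → G with f(x·k) = f(x)·x for all x ∈ G; (3) there exist k ∈ G and f : G → G with f(k·x) = x·f(x) for all x ∈ G; (4) there exist k ∈ G and f : G → G with f(k·x) = f(x)·x for all x ∈ G. -/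
/-- The four possible defining functional equations for a `J`-group are
equivalent for any group `G`. -/
theorem jGroup_four_definitions_tfae {G : Type*} [Group G] :
    List.TFAE
      [∃ (k : G) (f : G → G), ∀ x : G, f (x * k) = x * f x,
       ∃ (k : G) (f : G → G), ∀ x : G, f (x * k) = f x * x,
       ∃ (k : G) (f : G → G), ∀ x : G, f (k * x) = x * f x,
       ∃ (k : G) (f : G → G), ∀ x : G, f (k * x) = f x * x] := by
  tfae_have 1 → 4 := by
    rintro ⟨k, f, hf⟩
    refine ⟨k⁻¹, fun x => (f x⁻¹)⁻¹, fun x => ?_⟩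
    simp [hf]
  tfae_have 4 → 3 := by
    rintro ⟨k, f, hf⟩
    refine ⟨k⁻¹, fun x => (f (k * x))⁻¹, fun x => ?_⟩
    simp only [mul_inv_cancel_left, hf, mul_inv_rev]
  tfae_have 3 → 2 := by
    rintro ⟨k, f, hf⟩
    refine ⟨k⁻¹, fun x => (f x⁻¹)⁻¹, fun x => ?_⟩
    simp [hf]
  tfae_have 2 → 1 := by
    rintro ⟨k, f, hf⟩
    refine ⟨k⁻¹, fun x => (f (x * k))⁻¹, fun x => ?_⟩
    simp only [inv_mul_cancel_right, hf, mul_inv_rev, mul_inv_cancel_left]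
  tfae_finish
end

section
/- Let G₁ and G₂ be finite groups. If k₁ is a witness for G₁ and k₂ is a witness for G₂, then (k₁, k₂) is a witness for the direct product G₁ × G₂. Moreover, if the orders |G₁| and |G₂| are coprime, then conversely every witness of G₁ × G₂ has the form (k₁, k₂) with k₁ a witness for G₁ and k₂ a witness for G₂; that is, W(G₁) × W(G₂) = W(G₁ × G₂) when gcd(|G₁|, |G₂|) = 1. -/
/-- An element `k` of finite order `n` in a group `G` is a *witness* if the ordered
product `(x * k^(n-1)) * (x * k^(n-2)) * ⋯ * x` equals `1` for all `x ∈ G`. -/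
def IsWitness {G : Type*} [Group G] (k : G) : Prop :=
  IsOfFinOrder k ∧ ∀ x : G,
    ((List.range (orderOf k)).map (fun i => x * k ^ (orderOf k - 1 - i))).prod = 1

/-- If `k ^ n = 1`, the descending product of length `n * m` is the `m`-th power of the one of
length `n`. -/
theorem prod_range_mul_eq_pow {G : Type*} [Group G] {k : G} {n : ℕ} (hk : k ^ n = 1)
    (m : ℕ) (x : G) :
    ((List.range (n * m)).map (fun i => x * k ^ (n * m - 1 - i))).prod =
      ((List.range n).map (fun i => x * k ^ (n - 1 - i))).prod ^ m := by
  induction m with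
  | zero => simp
  | succ m ih =>
    rw [pow_succ, ← ih, Nat.mul_succ, List.range_add, List.map_append, List.prod_append,
      List.map_map]
    congr 2
    · refine List.map_congr_left fun i hi => ?_
      have hi : i < n * m := List.mem_range.1 hi
      rw [show n * m + n - 1 - i = n * m - 1 - i + n by omega, pow_add, hk, mul_one]
    · refine List.map_congr_left fun i _ => ?_
      simp only [Function.comp_apply]
      rw [show n * m + n - 1 - (n * m + i) = n - 1 - i by omega]

/-- A pair is a witness iff suitable powers of the descending products of its components
are trivial. -/
theorem isWitness_prod_iff_pow_eq_one {G₁ G₂ : Type*} [Group G₁] [Group G₂] [Finite G₁] [Finite G₂]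
    (k : G₁ × G₂) :
    IsWitness k ↔
      (∀ x : G₁, ((List.range (orderOf k.1)).map
        (fun i => x * k.1 ^ (orderOf k.1 - 1 - i))).prod ^ (orderOf k / orderOf k.1) = 1) ∧
      ∀ x : G₂, ((List.range (orderOf k.2)).map
        (fun i => x * k.2 ^ (orderOf k.2 - 1 - i))).prod ^ (orderOf k / orderOf k.2) = 1 := by
  have h₁ : orderOf k.1 ∣ orderOf k := orderOf_map_dvd (MonoidHom.fst G₁ G₂) k
  have h₂ : orderOf k.2 ∣ orderOf k := orderOf_map_dvd (MonoidHom.snd G₁ G₂) k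
  simp only [← prod_range_mul_eq_pow (pow_orderOf_eq_one _), Nat.mul_div_cancel' h₁,
    Nat.mul_div_cancel' h₂, IsWitness, isOfFinOrder_of_finite, true_and, Prod.ext_iff,
    Prod.forall, Prod.fst_one, Prod.snd_one]
  have hfst (l : List (G₁ × G₂)) : l.prod.1 = (l.map Prod.fst).prod :=
    map_list_prod (MonoidHom.fst G₁ G₂) l
  have hsnd (l : List (G₁ × G₂)) : l.prod.2 = (l.map Prod.snd).prod :=
    map_list_prod (MonoidHom.snd G₁ G₂) l
  simp only [hfst, hsnd, List.map_map, Function.comp_def, Prod.fst_mul, Prod.snd_mul,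
    Prod.pow_fst, Prod.pow_snd]
  exact ⟨fun h => ⟨fun x => (h x 1).1, fun x => (h 1 x).2⟩, fun h x y => ⟨h.1 x, h.2 y⟩⟩

/-- In a finite group, an element killed by an exponent coprime to the group order is trivial. -/
theorem eq_one_of_pow_eq_one_of_coprime_card {G : Type*} [Group G] [Fintype G] {g : G} {m : ℕ}
    (hm : Nat.Coprime (Fintype.card G) m) (hg : g ^ m = 1) : g = 1 :=
  orderOf_eq_one_iff.1 <| Nat.eq_one_of_dvd_coprimes hm orderOf_dvd_card
    (orderOf_dvd_of_pow_eq_one hg)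

/-- If `k₁` is a witness for `G₁` and `k₂` is a witness for `G₂`, then `(k₁, k₂)` is a
witness for `G₁ × G₂`; and if `|G₁|` and `|G₂|` are coprime, the witnesses of `G₁ × G₂`
are exactly the pairs of witnesses, i.e. `W(G₁) × W(G₂) = W(G₁ × G₂)`. -/
theorem isWitness_prod {G₁ G₂ : Type*} [Group G₁] [Group G₂]
    [Fintype G₁] [Fintype G₂] :
    (∀ (k₁ : G₁) (k₂ : G₂), IsWitness k₁ → IsWitness k₂ →
      IsWitness (k₁, k₂)) ∧
    (Nat.Coprime (Fintype.card G₁) (Fintype.card G₂) →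
      ∀ k : G₁ × G₂, IsWitness k ↔ IsWitness k.1 ∧ IsWitness k.2) := by
  have mk (k₁ : G₁) (k₂ : G₂) (h₁ : IsWitness k₁) (h₂ : IsWitness k₂) : IsWitness (k₁, k₂) :=
    (isWitness_prod_iff_pow_eq_one _).2
      ⟨fun x => by rw [h₁.2 x, one_pow], fun x => by rw [h₂.2 x, one_pow]⟩
  refine ⟨mk, fun hc k => ⟨fun hk => ?_, fun h => mk k.1 k.2 h.1 h.2⟩⟩
  obtain ⟨h₁, h₂⟩ := (isWitness_prod_iff_pow_eq_one k).1 hk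
  have hdvd : orderOf k ∣ orderOf k.1 * orderOf k.2 := by
    rw [Prod.orderOf]
    exact Nat.lcm_dvd_mul _ _
  have d₁ : orderOf k / orderOf k.1 ∣ Fintype.card G₂ :=
    ((Nat.div_dvd_iff_dvd_mul (orderOf_map_dvd (MonoidHom.fst G₁ G₂) k)
      (orderOf_pos k.1)).2 hdvd).trans orderOf_dvd_card
  have d₂ : orderOf k / orderOf k.2 ∣ Fintype.card G₁ :=
    ((Nat.div_dvd_iff_dvd_mul (orderOf_map_dvd (MonoidHom.snd G₁ G₂) k)
      (orderOf_pos k.2)).2 (by rwa [mul_comm])).trans orderOf_dvd_card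
  exact ⟨⟨isOfFinOrder_of_finite _, fun x =>
      eq_one_of_pow_eq_one_of_coprime_card (hc.coprime_dvd_right d₁) (h₁ x)⟩,
    ⟨isOfFinOrder_of_finite _, fun x =>
      eq_one_of_pow_eq_one_of_coprime_card (hc.symm.coprime_dvd_right d₂) (h₂ x)⟩⟩
end

section
/- Let G be a group, let k ∈ G be a witness (in particular k has finite order), and let N be a normal subgroup of G such that ⟨k⟩ ∩ N = 1. Then the coset k·N is a witness for the quotient group G/N. -/
/-- If `k` is a witness for `G` and `N` is a normal subgroup of `G` with
`⟨k⟩ ∩ N = 1`, then the coset `k N` is a witness for `G ⧸ N`. -/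
theorem isWitness_quotient {G : Type*} [Group G] (k : G) (hk : IsWitness k)
    (N : Subgroup G) [N.Normal] (h : Subgroup.zpowers k ⊓ N = ⊥) :
    IsWitness (k : G ⧸ N) := by
  have ho : orderOf (k : G ⧸ N) = orderOf k := by
    refine Nat.dvd_antisymm (orderOf_map_dvd (QuotientGroup.mk' N) k) (orderOf_dvd_of_pow_eq_one ?_)
    have hmem : k ^ orderOf (k : G ⧸ N) ∈ Subgroup.zpowers k ⊓ N :=
      ⟨Subgroup.npow_mem_zpowers k _, (QuotientGroup.eq_one_iff _).mp <| by
        rw [QuotientGroup.mk_pow, pow_orderOf_eq_one]⟩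
    rwa [h, Subgroup.mem_bot] at hmem
  refine ⟨(QuotientGroup.mk' N).isOfFinOrder hk.1, fun x => ?_⟩
  obtain ⟨g, rfl⟩ := QuotientGroup.mk_surjective x
  have hg := congrArg (QuotientGroup.mk' N) (hk.2 g)
  rw [map_list_prod, List.map_map, map_one] at hg
  rw [ho]
  exact hg
end

section
/- Let G be a finite group of odd order and let k ∈ G be a witness. Then the order of k equals the exponent of the centralizer C_G(k) of k in G. In particular, if k lies in the cyclic subgroup ⟨g⟩ generated by some g ∈ G, then the order of g equals the order of k. -/
/-- If `x` and `k` commute, the ordered product of the elements `x * k ^ f i` for `i < m` collects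
into a power of `x` times a power of `k`. -/
theorem Commute.prod_map_range_mul_pow {M : Type*} [Monoid M] {x k : M} (h : Commute x k)
    (f : ℕ → ℕ) (m : ℕ) :
    ((List.range m).map (fun i => x * k ^ f i)).prod = x ^ m * k ^ ∑ i ∈ Finset.range m, f i := by
  induction m with
  | zero => simp
  | succ m ih =>
    rw [List.range_succ, List.map_append, List.prod_append, ih, Finset.sum_range_succ, pow_succ,
      pow_add]
    simp only [List.map_cons, List.map_nil, List.prod_singleton]
    rw [mul_assoc, ← mul_assoc _ x, (h.pow_right _).symm.eq]
    simp only [mul_assoc]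

/-- An odd number `n` divides `0 + 1 + ⋯ + (n - 1)`. -/
theorem Odd.dvd_sum_range_id {n : ℕ} (hn : Odd n) : n ∣ ∑ i ∈ Finset.range n, i :=
  hn.coprime_two_right.dvd_of_dvd_mul_right
    (Finset.sum_range_id_mul_two n ▸ dvd_mul_right n (n - 1))

/-- Every element commuting with a witness `k` of odd order is killed by the order of `k`. -/
theorem IsWitness.pow_orderOf_eq_one {G : Type*} [Group G] {k : G} (hk : IsWitness k)
    (hodd : Odd (orderOf k)) {x : G} (h : Commute x k) : x ^ orderOf k = 1 := by
  have hprod := hk.2 x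
  rwa [h.prod_map_range_mul_pow (fun i => orderOf k - 1 - i),
    Finset.sum_range_reflect (fun i => i), orderOf_dvd_iff_pow_eq_one.mp hodd.dvd_sum_range_id,
    mul_one] at hprod

/-- In a finite group of odd order, the order of a witness `k` equals the exponent of
its centralizer; in particular, if `k ∈ ⟨g⟩` then `|g| = |k|`. -/
theorem orderOf_witness_eq_exponent_centralizer {G : Type*} [Group G] [Fintype G]
    (hodd : Odd (Fintype.card G)) (k : G) (hk : IsWitness k) :
    orderOf k = Monoid.exponent (Subgroup.centralizer {k}) ∧
      ∀ g : G, k ∈ Subgroup.zpowers g → orderOf g = orderOf k := by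
  have hn : Odd (orderOf k) := hodd.of_dvd_nat orderOf_dvd_card
  refine ⟨Nat.dvd_antisymm ?_ ?_, fun g hg => Nat.dvd_antisymm ?_ ?_⟩
  · have hmem : k ∈ Subgroup.centralizer {k} := Subgroup.mem_centralizer_singleton_iff.mpr rfl
    rw [← Subgroup.orderOf_mk k hmem]
    exact Monoid.order_dvd_exponent _
  · refine Monoid.exponent_dvd_of_forall_pow_eq_one fun x => Subtype.ext ?_
    exact hk.pow_orderOf_eq_one hn (Subgroup.mem_centralizer_singleton_iff.mp x.2)
  · obtain ⟨m, rfl⟩ := Subgroup.mem_zpowers_iff.mp hg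
    exact orderOf_dvd_of_pow_eq_one (hk.pow_orderOf_eq_one hn (Commute.self_zpow g m))
  · exact orderOf_dvd_of_mem_zpowers hg
end

section
/- Let p be an odd prime and let G be a finite p-group of exponent p. Then G is a J-group, and Z(G) ∩ W(G) = B(Z(G)); that is, the central witnesses are exactly the nontrivial elements of the centre. -/
/-- A central element can be collected to the right of a product of terms `x * k ^ f i`. -/
theorem List.prod_map_mul_pow_of_mem_center {G ι : Type*} [Group G] {k : G}
    (hk : k ∈ Subgroup.center G) (x : G) (f : ι → ℕ) (l : List ι) :
    (l.map fun i => x * k ^ f i).prod = x ^ l.length * k ^ (l.map f).sum := by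
  induction l with
  | nil => simp
  | cons a l ih =>
    have hcomm : Commute (k ^ f a) (x ^ l.length) :=
      (show Commute k (x ^ l.length) from (Subgroup.mem_center_iff.mp hk _).symm).pow_left _
    simp only [List.map_cons, List.prod_cons, List.sum_cons, List.length_cons, ih, pow_succ',
      pow_add]
    rw [mul_assoc, ← mul_assoc (k ^ f a), hcomm.eq]
    simp only [mul_assoc]

/-- An odd `n` divides the sum of the natural numbers below `n`, taken in decreasing order. -/
theorem Odd.dvd_sum_range_reflect {n : ℕ} (hn : Odd n) :
    n ∣ ((List.range n).map fun i => n - 1 - i).sum := by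
  have hsum : ((List.range n).map fun i => n - 1 - i).sum = ∑ i ∈ Finset.range n, i :=
    Finset.sum_range_reflect (fun i => i) n
  rw [hsum]
  refine (Nat.coprime_two_right.mpr hn).dvd_of_dvd_mul_right ?_
  rw [Finset.sum_range_id_mul_two]
  exact dvd_mul_right _ _

/-- A central element of odd order equal to the exponent of the group is a witness. -/
theorem isWitness_of_mem_center {G : Type*} [Group G] {k : G} (hk : k ∈ Subgroup.center G)
    (hodd : Odd (orderOf k)) (hexp : orderOf k = Monoid.exponent G) : IsWitness k := by
  refine ⟨orderOf_pos_iff.mp hodd.pos, fun x => ?_⟩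
  rw [List.prod_map_mul_pow_of_mem_center hk, List.length_range,
    orderOf_dvd_iff_pow_eq_one.mp hodd.dvd_sum_range_reflect, hexp,
    Monoid.pow_exponent_eq_one, mul_one]

/-- The identity is not a witness in a nontrivial group. -/
theorem not_isWitness_one {G : Type*} [Group G] [Nontrivial G] : ¬ IsWitness (1 : G) := by
  rintro ⟨-, h⟩
  obtain ⟨x, hx⟩ := exists_ne (1 : G)
  exact hx (by simpa using h x)

/-- A finite `p`-group of exponent `p`, with `p` an odd prime, is a `J`-group, and
`Z(G) ∩ W(G) = B(Z(G))`: the central witnesses are exactly the central elements of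
order equal to the exponent of the centre (i.e. the nontrivial central elements). -/
theorem pGroup_exponent_p_isJGroup {G : Type*} [Group G] [Fintype G] (p : ℕ)
    (hp : p.Prime) (hodd : Odd p) (hG : IsPGroup p G)
    (hexp : Monoid.exponent G = p) :
    (∃ k : G, IsWitness k) ∧
    (∀ k ∈ Subgroup.center G,
      (IsWitness k ↔ orderOf k = Monoid.exponent (Subgroup.center G))) := by
  have : Fact p.Prime := ⟨hp⟩
  have : Nontrivial G := by
    by_contra hG'
    rw [not_nontrivial_iff_subsingleton] at hG'
    exact hp.one_lt.ne (Monoid.exp_eq_one_iff.mpr hG' ▸ hexp)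
  have : Nontrivial (Subgroup.center G) := hG.center_nontrivial
  have horder : ∀ k : G, k ≠ 1 → orderOf k = p := fun k hk =>
    orderOf_eq_prime (hexp ▸ Monoid.pow_exponent_eq_one k) hk
  have hcenter : Monoid.exponent (Subgroup.center G) = p := by
    refine (hp.eq_one_or_self_of_dvd _ ?_).resolve_left fun h => ?_
    · exact hexp ▸ Monoid.exponent_submonoid_dvd (Subgroup.center G).toSubmonoid
    · exact not_subsingleton _ (Monoid.exp_eq_one_iff.mp h)
  have hwitness : ∀ k ∈ Subgroup.center G, orderOf k = p → IsWitness k := fun k hk hkp =>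
    isWitness_of_mem_center hk (hkp ▸ hodd) (hkp.trans hexp.symm)
  refine ⟨?_, fun k hk => ⟨fun h => ?_, fun h => hwitness k hk (h.trans hcenter)⟩⟩
  · obtain ⟨z, hz⟩ := exists_ne (1 : Subgroup.center G)
    exact ⟨z, hwitness z z.2 (horder z (by simpa using hz))⟩
  · rw [hcenter]
    exact horder k fun hk1 => not_isWitness_one (hk1 ▸ h)
end

section
/- Let p be an odd prime and let G be a finite p-group. Suppose N is a normal subgroup of G, k ∈ G, the coset k·N has order m in G/N, the element k^m lies in the centre of N and has order equal to the exponent of N, and k·N is a witness for G/N. Then k is a witness for G. -/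
/-- Right-multiplying every factor of a product by `z ^ q`, with `z` in an abelian normal
subgroup `A`, multiplies the product by the `q`-th power of an element of `A`
independent of `q`. -/
theorem exists_prod_map_mul_pow_eq {G : Type*} [Group G] (A : Subgroup G) [A.Normal]
    (hA : ∀ a ∈ A, ∀ b ∈ A, Commute a b) {z : G} (hz : z ∈ A) (l : List G) :
    ∃ c ∈ A, ∀ q : ℕ, (l.map (· * z ^ q)).prod = c ^ q * l.prod := by
  induction l with
  | nil => exact ⟨1, A.one_mem, by simp⟩
  | cons g l ih =>
    obtain ⟨c, hc, h⟩ := ih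
    refine ⟨g * (z * c) * g⁻¹, Subgroup.Normal.conj_mem ‹_› _ (A.mul_mem hz hc) g, fun q => ?_⟩
    rw [List.map_cons, List.prod_cons, h, conj_pow, (hA z hz c hc).mul_pow, List.prod_cons]
    group

/-- The descending product `(x * k ^ (m * q - 1)) * ⋯ * (x * k) * x`, computed by splitting it
into `q` blocks of length `m`. -/
theorem prod_range_mul_eq_pow_mul_pow {G : Type*} [Group G] (x k c w : G) (m : ℕ)
    (hcw : Commute c w)
    (hB : ∀ q : ℕ, ((List.range m).map fun i => x * k ^ (m - 1 - i) * (k ^ m) ^ q).prod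
      = c ^ q * w) (q : ℕ) :
    ((List.range (m * q)).map fun i => x * k ^ (m * q - 1 - i)).prod
      = c ^ (∑ i ∈ Finset.range q, i) * w ^ q := by
  induction q with
  | zero => simp
  | succ q ih =>
    have hblock : ((List.range m).map fun i => x * k ^ (m * (q + 1) - 1 - i))
        = (List.range m).map fun i => x * k ^ (m - 1 - i) * (k ^ m) ^ q := by
      refine List.map_congr_left fun i hi => ?_
      have hi := List.mem_range.mp hi
      rw [mul_assoc, ← pow_mul, ← pow_add, mul_add_one]
      congr 2
      omega
    have htail : ((List.range (m * q)).map fun i => x * k ^ (m * (q + 1) - 1 - (m + i)))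
        = (List.range (m * q)).map fun i => x * k ^ (m * q - 1 - i) := by
      refine List.map_congr_left fun i _ => ?_
      rw [mul_add_one]
      congr 2
      omega
    rw [show List.range (m * (q + 1)) = List.range (m + m * q) by rw [mul_add_one, add_comm],
      List.range_add, List.map_append, List.prod_append, List.map_map, hblock, hB]
    simp only [Function.comp_def]
    rw [htail, ih, Finset.sum_range_succ, add_comm _ q, pow_add, pow_succ' w, mul_assoc,
      ← mul_assoc w, ((hcw.pow_left _).eq).symm]
    simp only [mul_assoc]

/-- Let `G` be a finite `p`-group with `p` odd, `N ⊴ G`, and `k ∈ G` with `k N` of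
order `m` in `G ⧸ N`.  If `k ^ m` lies in the centre of `N`, `k ^ m` has order equal to
the exponent of `N`, and `k N` is a witness for `G ⧸ N`, then `k` is a witness
for `G`. -/
theorem isWitness_of_quotient_witness {G : Type*} [Group G] [Fintype G] (p : ℕ)
    (hp : p.Prime) (hodd : Odd p) (hG : IsPGroup p G)
    (N : Subgroup G) [N.Normal] (k : G) (m : ℕ)
    (hm : orderOf (k : G ⧸ N) = m)
    (hmem : k ^ m ∈ N) (hcentral : ∀ x ∈ N, x * k ^ m = k ^ m * x)
    (hord : orderOf (k ^ m) = Monoid.exponent N)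
    (hw : IsWitness (k : G ⧸ N)) :
    IsWitness k := by
  refine ⟨isOfFinOrder_of_finite k, fun x => ?_⟩
  have hm0 : m ≠ 0 := hm ▸ (orderOf_pos (k : G ⧸ N)).ne'
  have hdvd : m ∣ orderOf k := hm ▸ orderOf_map_dvd (QuotientGroup.mk' N) k
  have hcard : orderOf k = m * orderOf (k ^ m) := by
    rw [orderOf_pow_of_dvd hm0 hdvd, Nat.mul_div_cancel' hdvd]
  have hexp : ∀ a ∈ N, a ^ orderOf (k ^ m) = 1 := fun a ha => by
    have := Monoid.pow_exponent_eq_one (⟨a, ha⟩ : N)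
    rw [hord]
    simpa using congrArg Subtype.val this
  have hoddord : Odd (orderOf (k ^ m)) := by
    have := Fact.mk hp
    obtain ⟨r, hr⟩ := hG.exists_orderOf_eq_pow (k ^ m)
    exact hr ▸ hodd.pow
  let A : Subgroup G := (Subgroup.center N).map N.subtype
  have hAN : ∀ a ∈ A, a ∈ N ∧ ∀ b ∈ N, Commute a b := by
    rintro _ ⟨a, ha, rfl⟩
    refine ⟨a.2, fun b hb => ?_⟩
    exact (congrArg Subtype.val (Subgroup.mem_center_iff.mp ha ⟨b, hb⟩)).symm
  have hzA : k ^ m ∈ A :=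
    ⟨⟨k ^ m, hmem⟩, Subgroup.mem_center_iff.mpr fun b => Subtype.ext (hcentral b b.2), rfl⟩
  obtain ⟨c, hcA, hc⟩ := exists_prod_map_mul_pow_eq A
    (fun a ha b hb => (hAN a ha).2 b (hAN b hb).1) hzA
    ((List.range m).map fun i => x * k ^ (m - 1 - i))
  set w := ((List.range m).map fun i => x * k ^ (m - 1 - i)).prod with hwdef
  have hwN : w ∈ N := by
    have h := hw.2 (x : G ⧸ N)
    rw [hm] at h
    rw [← QuotientGroup.eq_one_iff, ← h, hwdef, ← QuotientGroup.mk'_apply, map_list_prod,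
      List.map_map]
    rfl
  rw [hcard, prod_range_mul_eq_pow_mul_pow x k c w m ((hAN c hcA).2 w hwN)
    (fun q => by simpa only [List.map_map, Function.comp_def] using hc q), hexp w hwN, mul_one]
  have hsum : orderOf (k ^ m) ∣ ∑ i ∈ Finset.range (orderOf (k ^ m)), i := by
    rw [Finset.sum_range_id]
    obtain ⟨r, hr⟩ := hoddord
    refine ⟨r, ?_⟩
    rw [hr, Nat.add_sub_cancel, mul_left_comm, Nat.mul_div_cancel_left _ two_pos]
  obtain ⟨s, hs⟩ := hsum
  rw [hs, pow_mul, hexp c (hAN c hcA).1, one_pow]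
end

section
/- Let p be an odd prime and let G be a finite p-group of nilpotency class c. If p > 2c − 1, then every element of G whose order equals the exponent of G is a witness (that is, B(G) ⊆ W(G)), and G is a J-group. -/
/-- The three subgroups lemma modulo a normal subgroup. -/
lemma commutator_commutator_le_of_rotate {G : Type*} [Group G] {H₁ H₂ H₃ N : Subgroup G}
    [N.Normal] (h₁ : ⁅⁅H₂, H₃⁆, H₁⁆ ≤ N) (h₂ : ⁅⁅H₃, H₁⁆, H₂⁆ ≤ N) : ⁅⁅H₁, H₂⁆, H₃⁆ ≤ N := by
  have key : ∀ H : Subgroup G, H ≤ N ↔ H.map (QuotientGroup.mk' N) = ⊥ := fun H => by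
    rw [Subgroup.map_eq_bot_iff, QuotientGroup.ker_mk']
  rw [key, Subgroup.map_commutator, Subgroup.map_commutator] at h₁ h₂ ⊢
  exact Subgroup.commutator_commutator_eq_bot_of_rotate h₁ h₂

lemma commutator_lowerCentralSeries_le (G : Type*) [Group G] (a b : ℕ) :
    ⁅(⊤ : Subgroup G).lowerCentralSeries a, (⊤ : Subgroup G).lowerCentralSeries b⁆ ≤
      (⊤ : Subgroup G).lowerCentralSeries (a + b + 1) := by
  induction b generalizing a with
  | zero => exact le_rfl
  | succ b ih =>
    rw [Subgroup.commutator_comm, Subgroup.lowerCentralSeries_succ _ b]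
    apply commutator_commutator_le_of_rotate
    · rw [Subgroup.commutator_comm ⊤, ← Subgroup.lowerCentralSeries_succ]
      exact (ih (a + 1)).trans (Subgroup.lowerCentralSeries_antitone _ (by omega))
    · exact Subgroup.commutator_mono (ih a) le_rfl

/-- The left difference operator on sequences in a group. -/
def seqDiff {G : Type*} [Group G] (f : ℕ → G) (m : ℕ) : G := f (m + 1) * (f m)⁻¹

/-- For each `i ≤ n`, the `i`-th difference of `f` takes values in `Γ (k + i)`. -/
def IsPolyUpTo {G : Type*} [Group G] (Γ : ℕ → Subgroup G) : ℕ → ℕ → (ℕ → G) → Prop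
  | 0, k, f => ∀ m, f m ∈ Γ k
  | n + 1, k, f => (∀ m, f m ∈ Γ k) ∧ IsPolyUpTo Γ n (k + 1) (seqDiff f)

namespace IsPolyUpTo

variable {G : Type*} [Group G] {Γ : ℕ → Subgroup G} {n k l : ℕ} {f g : ℕ → G}

lemma mem (hf : IsPolyUpTo Γ n k f) (m : ℕ) : f m ∈ Γ k := by
  cases n with
  | zero => exact hf m
  | succ n => exact hf.1 m

lemma of_succ (hf : IsPolyUpTo Γ (n + 1) k f) : IsPolyUpTo Γ n k f := by
  induction n generalizing k f with
  | zero => exact hf.1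
  | succ n ih => exact ⟨hf.1, ih hf.2⟩

lemma weaken (hΓ : Antitone Γ) (hlk : l ≤ k) (hf : IsPolyUpTo Γ n k f) :
    IsPolyUpTo Γ n l f := by
  induction n generalizing k l f with
  | zero => exact fun m => hΓ hlk (hf m)
  | succ n ih => exact ⟨fun m => hΓ hlk (hf.1 m), ih (Nat.succ_le_succ hlk) hf.2⟩

lemma shift (hf : IsPolyUpTo Γ n k f) : IsPolyUpTo Γ n k (fun m => f (m + 1)) := by
  induction n generalizing k f with
  | zero => exact fun m => hf (m + 1)
  | succ n ih => exact ⟨fun m => hf.1 (m + 1), ih hf.2⟩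

open scoped commutatorElement in
/-- Sequences that are polynomial with respect to a filtration are closed under products, and
their commutators are polynomial with respect to the sum of the degrees. -/
lemma mul_and_commutator (hΓ : Antitone Γ) (hcomm : ∀ a b, ⁅Γ a, Γ b⁆ ≤ Γ (a + b)) (n : ℕ) :
    (∀ k f g, IsPolyUpTo Γ n k f → IsPolyUpTo Γ n k g → IsPolyUpTo Γ n k (f * g)) ∧
      ∀ a b f g, IsPolyUpTo Γ n a f → IsPolyUpTo Γ n b g → IsPolyUpTo Γ n (a + b) ⁅f, g⁆ := by
  have hmem : ∀ {a b x y}, x ∈ Γ a → y ∈ Γ b → ⁅x, y⁆ ∈ Γ (a + b) := fun hx hy =>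
    hcomm _ _ (Subgroup.commutator_mem_commutator hx hy)
  induction n with
  | zero => exact ⟨fun k f g hf hg m => mul_mem (hf m) (hg m),
      fun a b f g hf hg m => hmem (hf m) (hg m)⟩
  | succ n ih =>
    obtain ⟨hmul, hcom⟩ := ih
    have hconj : ∀ {a b f g}, IsPolyUpTo Γ n a f → IsPolyUpTo Γ n b g →
        IsPolyUpTo Γ n b (f * g * f⁻¹) := fun {a b f g} hf hg => by
      have h := hmul _ _ _ ((hcom _ _ _ _ hf hg).weaken hΓ (Nat.le_add_left b a)) hg
      rwa [commutatorElement_def, inv_mul_cancel_right] at h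
    refine ⟨fun k f g hf hg => ⟨fun m => mul_mem (hf.1 m) (hg.1 m), ?_⟩,
      fun a b f g hf hg => ⟨fun m => hmem (hf.1 m) (hg.1 m), ?_⟩⟩
    · have h := hmul _ _ _ (hconj hf.of_succ.shift hg.2) hf.2
      convert h using 1
      funext m
      simp only [seqDiff, Pi.mul_apply, Pi.inv_apply]
      group
    · have hf' := hf.of_succ
      have hg' := hg.of_succ
      have hz := hcom _ _ _ _ hf' hg'
      have h₁ : IsPolyUpTo Γ n (a + b + 1) (seqDiff f * ⁅f, seqDiff g⁆ * (seqDiff f)⁻¹) :=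
        hconj hf.2 (hcom a (b + 1) _ _ hf' hg.2)
      have h₂ : IsPolyUpTo Γ n (a + b + 1) ⁅seqDiff f * seqDiff g, ⁅f, g⁆⁆ :=
        (hcom 1 _ _ _ (hmul _ _ _ (hf.2.weaken hΓ (by omega)) (hg.2.weaken hΓ (by omega)))
          hz).weaken hΓ (by omega)
      have h₃ : IsPolyUpTo Γ n (a + b + 1)
          (⁅f, g⁆ * ⁅seqDiff f, seqDiff g * g⁆ * ⁅f, g⁆⁻¹) :=
        hconj hz ((hcom _ _ _ _ hf.2
          (hmul _ _ _ (hg.2.weaken hΓ (Nat.le_succ b)) hg')).weaken hΓ (by omega))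
      convert hmul _ _ _ (hmul _ _ _ h₁ h₂) h₃ using 1
      funext m
      simp only [seqDiff, commutatorElement_def, Pi.mul_apply, Pi.inv_apply]
      group

lemma mul (hΓ : Antitone Γ) (hcomm : ∀ a b, ⁅Γ a, Γ b⁆ ≤ Γ (a + b))
    (hf : IsPolyUpTo Γ n k f) (hg : IsPolyUpTo Γ n k g) : IsPolyUpTo Γ n k (f * g) :=
  (mul_and_commutator hΓ hcomm n).1 k f g hf hg

lemma one : IsPolyUpTo Γ n k (fun _ => 1) := by
  induction n generalizing k with
  | zero => exact fun _ => one_mem _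
  | succ n ih =>
    refine ⟨fun _ => one_mem _, ?_⟩
    convert ih using 1
    simp [seqDiff, funext_iff]

lemma pow_choose (hΓ : Antitone Γ) {h : G} (j : ℕ) (hh : h ∈ Γ (k + j)) :
    IsPolyUpTo Γ n k (fun m => h ^ m.choose j) := by
  have hk : h ∈ Γ k := hΓ (Nat.le_add_right k j) hh
  induction n generalizing k j with
  | zero => exact fun _ => pow_mem hk _
  | succ n ih =>
    refine ⟨fun _ => pow_mem hk _, ?_⟩
    cases j with
    | zero =>
      convert one using 1
      simp [seqDiff, funext_iff]
    | succ j =>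
      have hh' : h ∈ Γ (k + 1 + j) := by rwa [Nat.add_right_comm]
      convert ih j hh' (hΓ (Nat.le_add_right _ j) hh') using 1
      simp [seqDiff, funext_iff, Nat.choose_succ_succ, pow_add]

lemma apply_mem_of_forall_lt (j : ℕ) (hf : IsPolyUpTo Γ j k f) (h1 : ∀ i < j, f i = 1) :
    f j ∈ Γ (k + j) := by
  induction j generalizing k f with
  | zero => exact hf 0
  | succ j ih =>
    have h := ih hf.2 fun i hi => by
      simp [seqDiff, h1 i (by omega), h1 (i + 1) (by omega)]
    rwa [seqDiff, h1 j (by omega), inv_one, mul_one, Nat.add_right_comm] at h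

/-- If all binomial coefficients `q.choose j` with `0 < j < N` kill `G`, a polynomial sequence with
respect to a filtration of length `N` which starts at `1` takes the value `1` at `q`. -/
lemma apply_eq_one (hΓ : Antitone Γ) (hcomm : ∀ a b, ⁅Γ a, Γ b⁆ ≤ Γ (a + b)) {N q : ℕ}
    (hN : Γ N = ⊥) (hq : ∀ j, 0 < j → j < N → ∀ h : G, h ^ q.choose j = 1)
    (hf : ∀ n, IsPolyUpTo Γ n 0 f) (h0 : f 0 = 1) : f q = 1 := by
  suffices H : ∀ i j, 0 < j → N ≤ i + j → ∀ f : ℕ → G, (∀ n, IsPolyUpTo Γ n 0 f) →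
      (∀ i < j, f i = 1) → f q = 1 from
    H N 1 one_pos (Nat.le_succ N) f hf fun i hi => by rwa [Nat.lt_one_iff.1 hi]
  intro i
  induction i with
  | zero =>
    intro j _ hNj f hf h1
    refine Nat.strong_induction_on q fun m ih => ?_
    by_cases hm : m < j
    · exact h1 m hm
    · have h := hΓ (by omega : N ≤ 0 + m) (apply_mem_of_forall_lt m (hf m) ih)
      rwa [hN, Subgroup.mem_bot] at h
  | succ i ih =>
    intro j hj hNj f hf h1
    by_cases hjN : j < N
    · have hfj := apply_mem_of_forall_lt j (hf j) h1
      have h := ih (j + 1) j.succ_pos (by omega) (f * fun m => (f j)⁻¹ ^ m.choose j)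
        (fun n => (hf n).mul hΓ hcomm (pow_choose hΓ j (inv_mem hfj))) fun i hi => by
          rcases Nat.lt_succ_iff_lt_or_eq.1 hi with hi | rfl
          · simp [h1 i hi, Nat.choose_eq_zero_of_lt hi]
          · simp
      simpa [hq j hj hjN] using h
    · exact ih j hj (by omega) f hf h1

end IsPolyUpTo

lemma Nat.Prime.pow_dvd_choose_pow_of_lt {p j : ℕ} (hp : p.Prime) (e : ℕ) (hj : 0 < j)
    (hjp : j < p) : p ^ e ∣ (p ^ e).choose j := by
  obtain ⟨j, rfl⟩ := Nat.exists_eq_add_one.2 hj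
  obtain ⟨q, hq⟩ := Nat.exists_eq_add_one.2 (pow_pos hp.pos e)
  have h := Nat.add_one_mul_choose_eq q j
  rw [← hq] at h
  exact ((Nat.coprime_of_lt_prime hj.ne' hjp hp).pow_left e).dvd_of_dvd_mul_right
    (Dvd.intro _ h)

/-- The ordered product `(x * k ^ (n - 1)) * ⋯ * (x * k) * x`. -/
def descendingProd {G : Type*} [Group G] (x k : G) (n : ℕ) : G :=
  ((List.range n).map (fun i => x * k ^ (n - 1 - i))).prod

lemma descendingProd_succ {G : Type*} [Group G] (x k : G) (n : ℕ) :
    descendingProd x k (n + 1) = x * k ^ n * descendingProd x k n := by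
  simp only [descendingProd, List.range_succ_eq_map, List.map_cons, List.prod_cons, List.map_map]
  congr 3
  funext i
  simp [Nat.sub_sub, Nat.add_comm]

lemma isPolyUpTo_descendingProd {G : Type*} [Group G] {Γ : ℕ → Subgroup G} (hΓ : Antitone Γ)
    (h2 : Γ 2 = ⊤) (x k : G) (n : ℕ) : IsPolyUpTo Γ n 0 (descendingProd x k) := by
  have hmem : ∀ i ≤ 2, ∀ y, y ∈ Γ i := fun i hi y => hΓ hi (h2 ▸ Subgroup.mem_top y)
  suffices IsPolyUpTo Γ (n + 1 + 1) 0 (descendingProd x k) from this.of_succ.of_succ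
  refine ⟨fun _ => hmem 0 (by simp) _, fun _ => hmem 1 (by simp) _, ?_⟩
  convert IsPolyUpTo.pow_choose (h := x * k * x⁻¹) hΓ 0 (hmem 2 le_rfl _) using 1
  funext m
  simp only [seqDiff, descendingProd_succ, Nat.choose_zero_right]
  group

/-- If `G` is a finite `p`-group (`p` odd) of nilpotency class `c` with `p > 2c - 1`,
then every element of order equal to the exponent of `G` is a witness
(`B(G) ⊆ W(G)`), and `G` is a `J`-group. -/
theorem pGroup_big_witness_of_large_p {G : Type*} [Group G] [Fintype G]
    [Group.IsNilpotent G] (p : ℕ) (hp : p.Prime) (hodd : Odd p)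
    (hG : IsPGroup p G) (c : ℕ) (hc : Group.nilpotencyClass G = c)
    (hpc : 2 * c - 1 < p) :
    (∀ k : G, orderOf k = Monoid.exponent G → IsWitness k) ∧
      ∃ k : G, IsWitness k := by
  have := Fact.mk hp
  obtain ⟨e, he⟩ := hG.exists_exponent_eq_pow
  have hB : ∀ k : G, orderOf k = Monoid.exponent G → IsWitness k := by
    refine fun k hk => ⟨isOfFinOrder_of_finite k, fun x => ?_⟩
    set Γ : ℕ → Subgroup G := fun a => (⊤ : Subgroup G).lowerCentralSeries ((a - 1) / 2) with hΓdef
    have hΓ : Antitone Γ := fun a b hab => Subgroup.lowerCentralSeries_antitone _ (by omega)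
    have hcomm : ∀ a b, ⁅Γ a, Γ b⁆ ≤ Γ (a + b) := fun a b => by
      rcases Nat.eq_zero_or_pos a with rfl | ha
      · simpa using Subgroup.commutator_le_right (Γ 0) (Γ b)
      · exact (commutator_lowerCentralSeries_le G _ _).trans
          (Subgroup.lowerCentralSeries_antitone _ (by omega))
    refine IsPolyUpTo.apply_eq_one hΓ hcomm (N := 2 * c + 1) ?_ ?_
      (isPolyUpTo_descendingProd hΓ rfl x k) rfl
    · simp [hΓdef, ← hc]
    · intro j hj hjc h
      obtain ⟨r, hr⟩ := hodd
      rw [hk, he]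
      exact Monoid.exponent_dvd_iff_forall_pow_eq_one.1
        (he ▸ hp.pow_dvd_choose_pow_of_lt e hj (by omega)) h
  refine ⟨hB, ?_⟩
  obtain ⟨k, hk⟩ : ∃ k : G, orderOf k = Monoid.exponent G := by
    obtain ⟨k, hk⟩ := hp.exists_orderOf_eq_pow_factorization_exponent G
    exact ⟨k, by rw [hk, he, hp.factorization_pow, Finsupp.single_eq_same]⟩
  exact ⟨k, hB k hk⟩
end

section
/- Let p be an odd prime and let G be a powerful finite p-group, meaning that the derived subgroup [G,G] is contained in the subgroup generated by the p-th powers of elements of G. Then G is a J-group and every element of G whose order equals the exponent of G is a witness (that is, B(G) ⊆ W(G)). -/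
namespace PowerfulPGroup

open Subgroup
open scoped commutatorElement

/-- The lower exponent-`p` central series: each term is the normal subgroup generated by the
`p`-th powers of elements of the previous term and their commutators with elements of `G`. -/
def lowerPSeries (p : ℕ) (G : Type*) [Group G] : ℕ → Subgroup G
  | 0 => ⊤
  | i + 1 => normalClosure
      {y | ∃ x ∈ lowerPSeries p G i, y = x ^ p ∨ ∃ g : G, y = ⁅x, g⁆}

instance lowerPSeries_normal (p : ℕ) (G : Type*) [Group G] (i : ℕ) :
    (lowerPSeries p G i).Normal := by
  cases i <;> unfold lowerPSeries <;> infer_instance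

variable {G : Type*} [Group G] {p : ℕ}

lemma pow_mem_lowerPSeries_succ {i : ℕ} {x : G} (hx : x ∈ lowerPSeries p G i) :
    x ^ p ∈ lowerPSeries p G (i + 1) :=
  subset_normalClosure ⟨x, hx, Or.inl rfl⟩

lemma commutator_mem_lowerPSeries_succ {i : ℕ} {x : G} (hx : x ∈ lowerPSeries p G i) (g : G) :
    ⁅x, g⁆ ∈ lowerPSeries p G (i + 1) :=
  subset_normalClosure ⟨x, hx, Or.inr ⟨g, rfl⟩⟩

lemma commutator_mem_lowerPSeries_succ' {i : ℕ} {x : G} (hx : x ∈ lowerPSeries p G i) (g : G) :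
    ⁅g, x⁆ ∈ lowerPSeries p G (i + 1) := by
  rw [← commutatorElement_inv]
  exact inv_mem (commutator_mem_lowerPSeries_succ hx g)

lemma pow_pow_mem_lowerPSeries (x : G) (i : ℕ) : x ^ p ^ i ∈ lowerPSeries p G i := by
  induction i with
  | zero => exact mem_top _
  | succ i ih =>
    rw [pow_succ, pow_mul]
    exact pow_mem_lowerPSeries_succ ih

lemma mk_pow_eq_one {i : ℕ} {x : G} (hx : x ∈ lowerPSeries p G i) :
    (x : G ⧸ lowerPSeries p G (i + 1)) ^ p = 1 := by
  rw [← QuotientGroup.mk_pow, QuotientGroup.eq_one_iff]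
  exact pow_mem_lowerPSeries_succ hx

lemma mk_commute {i : ℕ} {x : G} (hx : x ∈ lowerPSeries p G i)
    (q : G ⧸ lowerPSeries p G (i + 1)) :
    Commute (x : G ⧸ lowerPSeries p G (i + 1)) q := by
  induction q using QuotientGroup.induction_on with
  | H g =>
    rw [← commutatorElement_eq_one_iff_commute]
    exact (QuotientGroup.eq_one_iff _).2 (commutator_mem_lowerPSeries_succ hx g)

lemma commutatorElement_central_mul {c : G} (hc : ∀ g, Commute c g) (a b : G) :
    ⁅c * a, b⁆ = ⁅a, b⁆ := by
  rw [commutatorElement_def, commutatorElement_def, mul_inv_rev, (hc a⁻¹).inv_left.symm.eq,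
    mul_assoc c a b, (hc (a * b)).eq]
  group

lemma dvd_choose_two (hodd : Odd p) : p ∣ p.choose 2 := by
  obtain ⟨r, rfl⟩ := hodd
  refine ⟨r, ?_⟩
  rw [Nat.choose_two_right, Nat.add_sub_cancel, mul_left_comm, Nat.mul_div_cancel_left _ two_pos]

lemma mul_pow_of_central {a b c : G} (h : b * a = a * b * c) (hc : ∀ g, Commute c g) (n : ℕ) :
    (a * b) ^ n = a ^ n * b ^ n * c ^ n.choose 2 := by
  have swap (n : ℕ) : b * a ^ n = a ^ n * b * c ^ n := by
    induction n with
    | zero => simp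
    | succ n ih =>
      rw [pow_succ, ← mul_assoc, ih, mul_assoc _ _ a, ((hc a).pow_left n).eq, ← mul_assoc,
        mul_assoc _ b a, h, pow_succ']
      simp only [mul_assoc]
  induction n with
  | zero => simp
  | succ n ih =>
    rw [pow_succ', ih, Nat.choose_succ_succ' n 1, Nat.choose_one_right, pow_add c]
    calc a * b * (a ^ n * b ^ n * c ^ n.choose 2)
        = a * (b * a ^ n) * b ^ n * c ^ n.choose 2 := by simp only [mul_assoc]
      _ = a * a ^ n * b * (c ^ n * b ^ n) * c ^ n.choose 2 := by rw [swap]; simp only [mul_assoc]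
      _ = a * a ^ n * b * (b ^ n * c ^ n) * c ^ n.choose 2 := by
          rw [((hc (b ^ n)).pow_left n).eq]
      _ = a ^ (n + 1) * b ^ (n + 1) * (c ^ n * c ^ n.choose 2) := by
          rw [pow_succ' a, pow_succ' b]; simp only [mul_assoc]

lemma mk_mul_pow (hodd : Odd p) {i : ℕ} {a : G} (ha : a ∈ lowerPSeries p G i) (b : G) :
    (((a * b) ^ p : G) : G ⧸ lowerPSeries p G (i + 2)) = ((a ^ p * b ^ p : G) : G ⧸ _) := by
  have hc : ⁅b⁻¹, a⁻¹⁆ ∈ lowerPSeries p G (i + 1) :=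
    commutator_mem_lowerPSeries_succ' (inv_mem ha) _
  have h : (b : G ⧸ lowerPSeries p G (i + 2)) * a = a * b * (⁅b⁻¹, a⁻¹⁆ : G) := by
    simp only [← QuotientGroup.mk_mul]
    congr 1
    rw [commutatorElement_def]
    group
  obtain ⟨r, hr⟩ := dvd_choose_two hodd
  have key := mul_pow_of_central h (mk_commute hc) p
  rw [hr, pow_mul, mk_pow_eq_one hc, one_pow, mul_one] at key
  exact key

/-- Elements congruent modulo the term of index `i + 2` to a `p`-th power from the `i`-th term. -/
def powSubgroup (hodd : Odd p) (i : ℕ) : Subgroup G where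
  carrier := {y | ∃ x ∈ lowerPSeries p G i,
    (y : G ⧸ lowerPSeries p G (i + 2)) = ((x ^ p : G) : G ⧸ _)}
  one_mem' := ⟨1, one_mem _, by simp⟩
  mul_mem' := by
    rintro y z ⟨x, hx, hy⟩ ⟨w, hw, hz⟩
    refine ⟨x * w, mul_mem hx hw, ?_⟩
    rw [mk_mul_pow hodd hx, QuotientGroup.mk_mul, hy, hz, ← QuotientGroup.mk_mul]
  inv_mem' := by
    rintro y ⟨x, hx, hy⟩
    refine ⟨x⁻¹, inv_mem hx, ?_⟩
    rw [QuotientGroup.mk_inv, hy, inv_pow, QuotientGroup.mk_inv]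

lemma mem_powSubgroup {hodd : Odd p} {i : ℕ} {y : G} :
    y ∈ powSubgroup hodd i ↔ ∃ x ∈ lowerPSeries p G i,
      (y : G ⧸ lowerPSeries p G (i + 2)) = ((x ^ p : G) : G ⧸ _) :=
  Iff.rfl

instance powSubgroup_normal (hodd : Odd p) (i : ℕ) :
    (powSubgroup hodd i : Subgroup G).Normal where
  conj_mem := by
    rintro y ⟨x, hx, hy⟩ g
    refine ⟨g * x * g⁻¹, (lowerPSeries_normal p G i).conj_mem x hx g, ?_⟩
    rw [conj_pow]
    simp only [QuotientGroup.mk_mul, hy]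

lemma commutator_pow_mem_powSubgroup (hodd : Odd p) {i : ℕ} {u : G}
    (hu : u ∈ lowerPSeries p G i) (g : G) : ⁅u ^ p, g⁆ ∈ powSubgroup hodd (i + 1) := by
  rw [← commutatorElement_inv]
  refine inv_mem ⟨⁅g, u⁆, commutator_mem_lowerPSeries_succ' hu g, ?_⟩
  have key := mk_mul_pow hodd (commutator_mem_lowerPSeries_succ' hu g) u
  have h1 : ⁅g, u⁆ * u = g * u * g⁻¹ := by rw [commutatorElement_def]; group
  rw [h1, conj_pow] at key
  rw [commutatorElement_def g, QuotientGroup.mk_mul, key, ← QuotientGroup.mk_mul,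
    mul_inv_cancel_right]

lemma lowerPSeries_succ_le_powSubgroup (hodd : Odd p)
    (hpow : commutator G ≤ closure (Set.range fun g : G => g ^ p)) (i : ℕ) :
    lowerPSeries p G (i + 1) ≤ powSubgroup hodd i := by
  induction i with
  | zero =>
    refine normalClosure_le_normal ?_
    rintro y ⟨x, hx, rfl | ⟨g, rfl⟩⟩
    · exact ⟨x, hx, rfl⟩
    · have hle : closure (Set.range fun g : G => g ^ p) ≤ powSubgroup hodd 0 := by
        rw [closure_le]
        rintro _ ⟨x, rfl⟩
        exact ⟨x, mem_top x, rfl⟩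
      exact hle (hpow (commutator_mem_commutator (mem_top x) (mem_top g)))
  | succ i ih =>
    refine normalClosure_le_normal ?_
    rintro y ⟨x, hx, rfl | ⟨g, rfl⟩⟩
    · exact ⟨x, hx, rfl⟩
    · obtain ⟨u, hu, hxu⟩ := ih hx
      obtain ⟨v, hv, hcv⟩ := mem_powSubgroup.1 (commutator_pow_mem_powSubgroup hodd hu g)
      refine ⟨v, hv, ?_⟩
      rw [← hcv]
      have hz : x * (u ^ p)⁻¹ ∈ lowerPSeries p G (i + 2) := by
        rw [← QuotientGroup.eq_one_iff, QuotientGroup.mk_mul, hxu, QuotientGroup.mk_inv,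
          mul_inv_cancel]
      have hx' : x = x * (u ^ p)⁻¹ * u ^ p := by group
      rw [hx']
      exact commutatorElement_central_mul (mk_commute hz) ((u ^ p : G) : G ⧸ _) (g : G ⧸ _)

lemma exists_mk_eq_pow_pow (hodd : Odd p)
    (hpow : commutator G ≤ closure (Set.range fun g : G => g ^ p)) (i : ℕ) {y : G}
    (hy : y ∈ lowerPSeries p G i) :
    ∃ g : G, (y : G ⧸ lowerPSeries p G (i + 1)) = ((g ^ p ^ i : G) : G ⧸ _) := by
  induction i generalizing y with
  | zero => exact ⟨y, by simp⟩
  | succ i ih =>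
    obtain ⟨x, hx, hyx⟩ := lowerPSeries_succ_le_powSubgroup hodd hpow i hy
    obtain ⟨g, hg⟩ := ih hx
    refine ⟨g, ?_⟩
    have hz : x * (g ^ p ^ i)⁻¹ ∈ lowerPSeries p G (i + 1) := by
      rw [← QuotientGroup.eq_one_iff, QuotientGroup.mk_mul, hg, QuotientGroup.mk_inv,
        mul_inv_cancel]
    have hx' : x = x * (g ^ p ^ i)⁻¹ * g ^ p ^ i := by group
    rw [hyx, hx', QuotientGroup.mk_pow, QuotientGroup.mk_mul, (mk_commute hz _).mul_pow,
      mk_pow_eq_one hz, one_mul, ← QuotientGroup.mk_pow, ← pow_mul, ← pow_succ]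

lemma lowerPSeries_le_comap {H : Type*} [Group H] (f : G →* H) (i : ℕ) :
    lowerPSeries p G i ≤ (lowerPSeries p H i).comap f := by
  induction i with
  | zero => exact fun x _ => mem_top (f x)
  | succ i ih =>
    refine normalClosure_le_normal ?_
    rintro y ⟨x, hx, rfl | ⟨g, rfl⟩⟩
    · simpa using pow_mem_lowerPSeries_succ (ih hx)
    · simpa [map_commutatorElement] using commutator_mem_lowerPSeries_succ (ih hx) (f g)

lemma exists_lowerPSeries_eq_bot (hp : p.Prime) [Finite G] (hG : IsPGroup p G) :
    ∃ i, lowerPSeries p G i = ⊥ := by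
  have := Fact.mk hp
  induction h : Nat.card G using Nat.strong_induction_on generalizing G with
  | h n ih =>
    rcases subsingleton_or_nontrivial G with _ | _
    · exact ⟨0, Subsingleton.elim _ _⟩
    have := hG.center_nontrivial
    have hdvd : p ∣ Nat.card (center G) :=
      ((hG.to_subgroup _).card_eq_or_dvd).resolve_left Finite.one_lt_card.ne'
    obtain ⟨z, hz⟩ := exists_prime_orderOf_dvd_card' p hdvd
    have hzc : ∀ t ∈ zpowers (z : G), t ∈ center G := by
      rw [← SetLike.le_def, zpowers_le]
      exact z.2
    have hzp : (z : G) ^ p = 1 := by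
      rw [← hz, ← SubmonoidClass.coe_pow, pow_orderOf_eq_one, OneMemClass.coe_one]
    have : (zpowers (z : G)).Normal := ⟨fun t ht g => by
      rwa [mem_center_iff.1 (hzc t ht) g, mul_inv_cancel_right]⟩
    have hcard : Nat.card (G ⧸ zpowers (z : G)) < n := by
      rw [← h, card_eq_card_quotient_mul_card_subgroup (zpowers (z : G)), Nat.card_zpowers,
        orderOf_coe, hz]
      exact lt_mul_of_one_lt_right Nat.card_pos hp.one_lt
    obtain ⟨i, hi⟩ := ih _ hcard (hG.to_quotient _) rfl
    refine ⟨i + 1, normalClosure_eq_bot_iff.2 ?_⟩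
    rintro y ⟨x, hx, hy⟩
    have hx' := lowerPSeries_le_comap (QuotientGroup.mk' (zpowers (z : G))) i hx
    rw [hi, mem_comap, mem_bot, QuotientGroup.mk'_apply, QuotientGroup.eq_one_iff] at hx'
    rcases hy with rfl | ⟨g, rfl⟩
    · obtain ⟨t, rfl⟩ := hx'
      rw [Set.mem_singleton_iff, ← zpow_natCast, zpow_comm, zpow_natCast, hzp, one_zpow]
    · exact commutatorElement_eq_one_iff_commute.2 (mem_center_iff.1 (hzc x hx') g).symm

lemma lowerPSeries_eq_bot_of_powerful (hp : p.Prime) (hodd : Odd p) [Finite G]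
    (hG : IsPGroup p G) (hpow : commutator G ≤ closure (Set.range fun g : G => g ^ p))
    {m : ℕ} (hm : ∀ g : G, g ^ p ^ m = 1) : lowerPSeries p G m = ⊥ := by
  have step (i : ℕ) : lowerPSeries p G (m + i) ≤ lowerPSeries p G (m + i + 1) := by
    intro y hy
    obtain ⟨g, hg⟩ := exists_mk_eq_pow_pow hodd hpow _ hy
    rw [← QuotientGroup.eq_one_iff, hg, pow_add, pow_mul, hm, one_pow, QuotientGroup.mk_one]
  have le (i : ℕ) : lowerPSeries p G m ≤ lowerPSeries p G (m + i) := by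
    induction i with
    | zero => exact le_rfl
    | succ i ih => exact ih.trans (step i)
  have anti : Antitone (lowerPSeries p G) := antitone_nat_of_succ_le fun i => by
    refine normalClosure_le_normal ?_
    rintro y ⟨x, hx, rfl | ⟨g, rfl⟩⟩
    · exact pow_mem hx p
    · rw [commutatorElement_def, mul_assoc, mul_assoc, ← mul_assoc g]
      exact mul_mem hx ((lowerPSeries_normal p G i).conj_mem _ (inv_mem hx) g)
  obtain ⟨i, hi⟩ := exists_lowerPSeries_eq_bot hp hG
  exact le_bot_iff.1 ((le i).trans ((anti (Nat.le_add_left i m)).trans hi.le))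

/-- The product `(x * k ^ (n - 1)) * ⋯ * (x * k) * x`. -/
def descProd (x k : G) : ℕ → G
  | 0 => 1
  | n + 1 => x * k ^ n * descProd x k n

lemma list_prod_eq_descProd (x k : G) (n : ℕ) :
    ((List.range n).map fun i => x * k ^ (n - 1 - i)).prod = descProd x k n := by
  induction n with
  | zero => rfl
  | succ n ih =>
    rw [List.range_succ_eq_map, List.map_cons, List.prod_cons, descProd, ← ih, List.map_map]
    congr 3
    funext i
    simp [Nat.sub_sub, Nat.add_comm]

lemma descProd_add (x k : G) (a b : ℕ) :
    descProd x k (a + b) = descProd (x * k ^ b) k a * descProd x k b := by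
  induction a with
  | zero => simp [descProd]
  | succ a ih =>
    rw [Nat.succ_add, descProd, ih, descProd, add_comm a b, pow_add]
    simp only [mul_assoc]

lemma map_descProd {H : Type*} [Group H] (f : G →* H) (x k : G) (n : ℕ) :
    f (descProd x k n) = descProd (f x) (f k) n := by
  induction n with
  | zero => exact map_one f
  | succ n ih => simp [descProd, ih]

lemma descProd_mul_central {c : G} (hc : ∀ g, Commute c g) (x k : G) (n : ℕ) :
    descProd (x * c) k n = descProd x k n * c ^ n := by
  induction n with
  | zero => simp [descProd]
  | succ n ih =>
    rw [descProd, ih, descProd, mul_assoc x c, (hc (k ^ n)).eq, pow_succ']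
    simp only [mul_assoc]
    rw [← mul_assoc c, (hc (descProd x k n)).eq, mul_assoc]

lemma descProd_mul {k : G} {n : ℕ} (hc : ∀ g, Commute (k ^ n) g) (x : G) (t : ℕ) :
    descProd x k (t * n) = descProd x k n ^ t * (k ^ n) ^ (n * t.choose 2) := by
  induction t with
  | zero => simp [descProd]
  | succ t ih =>
    have hct : ∀ g, Commute (k ^ (t * n)) g := fun g => by
      rw [mul_comm, pow_mul]
      exact (hc g).pow_left t
    rw [Nat.succ_mul, add_comm, descProd_add, descProd_mul_central hct, ih, mul_assoc,
      ← mul_assoc (_ ^ n), ((hct (descProd x k n ^ t)).pow_left n).eq, mul_assoc, ← mul_assoc,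
      ← pow_succ', Nat.choose_succ_succ' t 1, Nat.choose_one_right, mul_add, pow_add (k ^ n),
      mul_comm t n, pow_mul k n t, ← pow_mul (k ^ n) t n, mul_comm t n]

lemma descProd_mem_lowerPSeries (hodd : Odd p) (x k : G) (m : ℕ) :
    descProd x k (p ^ m) ∈ lowerPSeries p G m := by
  induction m with
  | zero => exact mem_top _
  | succ m ih =>
    have hk := pow_pow_mem_lowerPSeries (p := p) k m
    obtain ⟨r, hr⟩ := dvd_choose_two hodd
    have key := descProd_mul (k := (k : G ⧸ lowerPSeries p G (m + 1))) (n := p ^ m)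
      (mk_commute hk) x p
    have e := map_descProd (QuotientGroup.mk' (lowerPSeries p G (m + 1))) x k
    simp only [QuotientGroup.mk'_apply] at e
    rw [← QuotientGroup.eq_one_iff, e, pow_succ', key, ← e, mk_pow_eq_one ih, one_mul, hr,
      mul_left_comm, pow_mul, ← QuotientGroup.mk_pow, mk_pow_eq_one hk, one_pow]

end PowerfulPGroup

/-- A powerful finite `p`-group with `p` odd (i.e. `[G,G] ≤ ⟨g^p : g ∈ G⟩`) is a
`J`-group and every element of order equal to the exponent of `G` is a witness
(`B(G) ⊆ W(G)`). -/
theorem powerful_pGroup_isJGroup {G : Type*} [Group G] [Fintype G] (p : ℕ)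
    (hp : p.Prime) (hodd : Odd p) (hG : IsPGroup p G)
    (hpow : commutator G ≤ Subgroup.closure (Set.range fun g : G => g ^ p)) :
    (∃ k : G, IsWitness k) ∧
      ∀ k : G, orderOf k = Monoid.exponent G → IsWitness k := by
  have := Fact.mk hp
  obtain ⟨m, hm⟩ := isPGroup_iff_exponent_eq_pow.1 hG
  have hbot := PowerfulPGroup.lowerPSeries_eq_bot_of_powerful hp hodd hG hpow (m := m)
    fun g => by rw [← hm, Monoid.pow_exponent_eq_one]
  have main : ∀ k : G, orderOf k = Monoid.exponent G → IsWitness k := by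
    refine fun k hk => ⟨isOfFinOrder_of_finite k, fun x => ?_⟩
    rw [PowerfulPGroup.list_prod_eq_descProd, hk, hm, ← Subgroup.mem_bot, ← hbot]
    exact PowerfulPGroup.descProd_mem_lowerPSeries hodd x k m
  obtain ⟨k, hk⟩ := hp.exists_orderOf_eq_pow_factorization_exponent G
  rw [hm, hp.factorization_pow, Finsupp.single_eq_same, ← hm] at hk
  exact ⟨⟨k, main k hk⟩, main⟩
end

section
/- Let s be a positive odd integer and let α be an integer with α^s ≡ 1 (mod s). Then the sum ∑_{ℓ=0}^{s−1} α^ℓ is congruent to 0 modulo s, and the sum ∑_{ℓ=0}^{s−1} ℓ·α^ℓ is congruent to 0 modulo s. -/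
open Finset

/-- Splitting a sum over `range (p * N)` into `p` blocks of length `N`. -/
lemma sum_range_mul_eq_sum_sum {M : Type*} [AddCommMonoid M] (f : ℕ → M) (p N : ℕ) :
    ∑ ℓ ∈ range (p * N), f ℓ = ∑ i ∈ range p, ∑ r ∈ range N, f (i * N + r) := by
  induction p with
  | zero => simp
  | succ p ih => rw [Nat.succ_mul, sum_range_add, ih, sum_range_succ]

lemma sum_range_mul_pow {R : Type*} [CommSemiring R] (a : R) (p N : ℕ) :
    ∑ ℓ ∈ range (p * N), a ^ ℓ = (∑ i ∈ range p, (a ^ N) ^ i) * ∑ r ∈ range N, a ^ r := by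
  rw [sum_range_mul_eq_sum_sum, sum_mul]
  refine sum_congr rfl fun i _ => ?_
  rw [mul_sum]
  refine sum_congr rfl fun r _ => ?_
  rw [pow_add, mul_comm i N, pow_mul]

lemma sum_range_mul_natCast_mul_pow {R : Type*} [CommSemiring R] (a : R) (p N : ℕ) :
    ∑ ℓ ∈ range (p * N), (ℓ : R) * a ^ ℓ =
      N * (∑ i ∈ range p, (i : R) * (a ^ N) ^ i) * (∑ r ∈ range N, a ^ r) +
        (∑ i ∈ range p, (a ^ N) ^ i) * ∑ r ∈ range N, (r : R) * a ^ r := by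
  rw [sum_range_mul_eq_sum_sum, mul_sum (range p), sum_mul, sum_mul, ← sum_add_distrib]
  refine sum_congr rfl fun i _ => ?_
  rw [mul_sum, mul_sum, ← sum_add_distrib]
  refine sum_congr rfl fun r _ => ?_
  rw [pow_add, mul_comm i N, pow_mul]
  push_cast
  ring

lemma dvd_sum_range_pow_of_modEq_one {p : ℕ} {b : ℤ} (hb : b ≡ 1 [ZMOD p]) :
    (p : ℤ) ∣ ∑ i ∈ range p, b ^ i := by
  rw [← ZMod.intCast_eq_intCast_iff] at hb
  rw [← ZMod.intCast_zmod_eq_zero_iff_dvd]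
  push_cast at hb ⊢
  simp [hb]

lemma dvd_sum_range_mul_pow_of_modEq_one {p : ℕ} (hp : Odd p) {b : ℤ} (hb : b ≡ 1 [ZMOD p]) :
    (p : ℤ) ∣ ∑ i ∈ range p, (i : ℤ) * b ^ i := by
  have hgauss : p ∣ ∑ i ∈ range p, i := by
    refine (Nat.Coprime.dvd_mul_right hp.coprime_two_right).1 ?_
    rw [sum_range_id_mul_two]
    exact dvd_mul_right _ _
  rw [← ZMod.intCast_eq_intCast_iff] at hb
  rw [← ZMod.intCast_zmod_eq_zero_iff_dvd]
  rw [← ZMod.natCast_eq_zero_iff] at hgauss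
  push_cast at hb hgauss ⊢
  simpa [hb] using hgauss

/-- If `a ≡ 1` modulo an odd `p`, then `p ^ k` divides both sums of length `p ^ k * m`. -/
lemma pow_dvd_sum_range_of_modEq_one {p : ℕ} (hp : Odd p) {a : ℤ} (ha : a ≡ 1 [ZMOD p])
    (k m : ℕ) :
    (p : ℤ) ^ k ∣ ∑ ℓ ∈ range (p ^ k * m), a ^ ℓ ∧
      (p : ℤ) ^ k ∣ ∑ ℓ ∈ range (p ^ k * m), (ℓ : ℤ) * a ^ ℓ := by
  induction k with
  | zero => simp
  | succ k ih =>
    have hb : a ^ (p ^ k * m) ≡ 1 [ZMOD p] := by simpa using ha.pow (p ^ k * m)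
    have hS := dvd_sum_range_pow_of_modEq_one hb
    have hT := dvd_sum_range_mul_pow_of_modEq_one hp hb
    rw [pow_succ' p, mul_assoc, sum_range_mul_pow, sum_range_mul_natCast_mul_pow, pow_succ']
    refine ⟨mul_dvd_mul hS ih.1, dvd_add ?_ (mul_dvd_mul hS ih.2)⟩
    rw [mul_comm ((p ^ k * m : ℕ) : ℤ), mul_assoc]
    exact mul_dvd_mul hT (Dvd.dvd.mul_right (by push_cast; exact dvd_mul_right _ _) _)

lemma sub_one_mul_sum_range_natCast_mul_pow {R : Type*} [CommRing R] (a : R) (n : ℕ) :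
    (a - 1) * ∑ ℓ ∈ range n, (ℓ : R) * a ^ ℓ = n * a ^ n - a * ∑ ℓ ∈ range n, a ^ ℓ := by
  induction n with
  | zero => simp
  | succ n ih =>
    rw [sum_range_succ, sum_range_succ, mul_add, ih]
    push_cast
    ring

/-- If `a - 1` is coprime to a divisor `d` of `n` and `a ^ n ≡ 1` modulo `d`, then `d` divides
both sums of length `n`. -/
lemma dvd_sum_range_of_isCoprime {d a : ℤ} {n : ℕ} (hd : IsCoprime d (a - 1)) (hn : d ∣ n)
    (ha : d ∣ a ^ n - 1) :
    d ∣ ∑ ℓ ∈ range n, a ^ ℓ ∧ d ∣ ∑ ℓ ∈ range n, (ℓ : ℤ) * a ^ ℓ := by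
  have hS : d ∣ ∑ ℓ ∈ range n, a ^ ℓ := hd.dvd_of_dvd_mul_left (by rwa [mul_geom_sum])
  refine ⟨hS, hd.dvd_of_dvd_mul_left ?_⟩
  rw [sub_one_mul_sum_range_natCast_mul_pow]
  exact dvd_sub (hn.mul_right _) (hS.mul_left _)

lemma natCast_dvd_of_prime_pow_dvd {n : ℕ} {x : ℤ}
    (h : ∀ p k : ℕ, p.Prime → p ^ k ∣ n → (p : ℤ) ^ k ∣ x) : (n : ℤ) ∣ x := by
  rw [Int.natCast_dvd, Nat.dvd_iff_prime_pow_dvd_dvd]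
  intro p k hp hk
  rw [← Int.natCast_dvd]
  exact_mod_cast h p k hp hk


/-- If `s` is a positive odd integer and `α^s ≡ 1 (mod s)`, then
`∑_{ℓ=0}^{s-1} α^ℓ ≡ 0 (mod s)` and `∑_{ℓ=0}^{s-1} ℓ·α^ℓ ≡ 0 (mod s)`. -/
theorem sum_pow_modEq_zero (s : ℕ) (hs : 0 < s) (hodd : Odd s) (α : ℤ)
    (hα : α ^ s ≡ 1 [ZMOD (s : ℤ)]) :
    (∑ ℓ ∈ Finset.range s, α ^ ℓ) ≡ 0 [ZMOD (s : ℤ)] ∧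
      (∑ ℓ ∈ Finset.range s, (ℓ : ℤ) * α ^ ℓ) ≡ 0 [ZMOD (s : ℤ)] := by
  have key : ∀ p k : ℕ, p.Prime → p ^ k ∣ s →
      (p : ℤ) ^ k ∣ ∑ ℓ ∈ range s, α ^ ℓ ∧ (p : ℤ) ^ k ∣ ∑ ℓ ∈ range s, (ℓ : ℤ) * α ^ ℓ := by
    intro p k hp hk
    rcases Nat.eq_zero_or_pos k with rfl | hk0
    · simp
    by_cases h1 : (p : ℤ) ∣ α - 1
    · have hpodd : Odd p := hodd.of_dvd_nat ((dvd_pow_self p hk0.ne').trans hk)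
      obtain ⟨m, rfl⟩ := hk
      exact pow_dvd_sum_range_of_modEq_one hpodd (Int.modEq_iff_dvd.2 h1).symm k m
    · have hks : (p : ℤ) ^ k ∣ s := by exact_mod_cast hk
      exact dvd_sum_range_of_isCoprime
        (((Nat.prime_iff_prime_int.1 hp).coprime_iff_not_dvd.2 h1).pow_left) hks
        (hks.trans hα.symm.dvd)
  exact ⟨Int.modEq_zero_iff_dvd.2 (natCast_dvd_of_prime_pow_dvd fun p k hp hk => (key p k hp hk).1),
    Int.modEq_zero_iff_dvd.2 (natCast_dvd_of_prime_pow_dvd fun p k hp hk => (key p k hp hk).2)⟩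
end
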